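/- arXiv:1806.07948 — 3 statements merged into one kernel-verified Lean document; each statement's English description precedes it below -/
import Mathlib

section
/- ψ(3/5) = −γ + (π/2)·√(1 − 2/√5) − (5/4)·ln 5 + (√5/4)·ln((3 + √5)/2), where ψ is the digamma function and γ is the Euler–Mascheroni constant. (This is the corrected form of Jensen's erroneous formula for ψ(3/5).) -/
noncomputable def digamma (x : ℝ) : ℝ := deriv Real.Gamma x / Real.Gamma x

open Filter Topology Set in
lemma digamma_lim (x : ℝ) (hx : 0 < x) :
    Tendsto (fun n : ℕ => ∑ k ∈ Finset.range n, (1 / (x + k) - 1 / ((k : ℝ) + 1))) atTop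
      (𝓝 (-Real.eulerMascheroniConstant - digamma x)) := by
  let f := Real.log ∘ Real.Gamma
  have hc : ConvexOn ℝ (Ioi 0) f := Real.convexOn_log_Gamma
  have h_rec (x : ℝ) (hx : 0 < x) : f (x + 1) = f x + Real.log x := by
    simp only [f, Function.comp_apply,
      Real.Gamma_add_one hx.ne', Real.log_mul hx.ne' (Real.Gamma_pos_of_pos hx).ne', add_comm]
  have hdG {x : ℝ} (hx : 0 < x) : DifferentiableAt ℝ Real.Gamma x := by
    refine Real.differentiableAt_Gamma fun m => ne_of_gt ?_
    have : (0:ℝ) ≤ m := m.cast_nonneg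
    linarith
  have hder {x : ℝ} (hx : 0 < x) : DifferentiableAt ℝ f x :=
    (hdG hx).log (Real.Gamma_pos_of_pos hx).ne'
  have hder_rec (x : ℝ) (hx : 0 < x) : deriv f (x + 1) = deriv f x + 1 / x := by
    rw [← deriv_comp_add_const, one_div, ← Real.deriv_log,
      ← deriv_add (hder <| by positivity) (Real.differentiableAt_log hx.ne')]
    apply EventuallyEq.deriv_eq
    filter_upwards [eventually_gt_nhds hx] using h_rec
  have hdig : deriv f x = digamma x := by
    unfold digamma
    exact deriv.log (hdG hx) (Real.Gamma_pos_of_pos hx).ne'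
  have hsum (n : ℕ) : deriv f (x + n) = digamma x + ∑ k ∈ Finset.range n, 1 / (x + k) := by
    induction n with
    | zero => simp [hdig]
    | succ n ih =>
      rw [Finset.sum_range_succ, Nat.cast_succ, ← add_assoc x, hder_rec _ (by positivity), ih]
      ring
  have hLB (y : ℝ) (hy : 0 < y) : Real.log y ≤ deriv f (y + 1) := by
    refine (le_of_eq ?_).trans <| hc.slope_le_deriv (mem_Ioi.mpr hy)
      (by show (0:ℝ) < y + 1; positivity) (by linarith) (hder <| by positivity)
    rw [slope_def_field, show y + 1 - y = (1 : ℝ) by ring, div_one, h_rec y hy,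
      add_sub_cancel_left]
  have hUB (y : ℝ) (hy : 0 < y) : deriv f y ≤ Real.log y := by
    refine (hc.deriv_le_slope (mem_Ioi.mpr hy) (by show (0:ℝ) < y + 1; positivity)
        (by linarith) (hder hy)).trans (le_of_eq ?_)
    rw [slope_def_field, show y + 1 - y = (1 : ℝ) by ring, div_one, h_rec y hy,
      add_sub_cancel_left]
  have hlow (y : ℝ) (hy : 0 < y) : Real.log y - 1 / y ≤ deriv f y := by
    have := hLB y hy
    rw [hder_rec y hy] at this
    linarith
  have hinv : Tendsto (fun n : ℕ => 1 / (x + (n:ℝ))) atTop (𝓝 0) := by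
    simp only [one_div]
    exact (tendsto_atTop_add_const_left _ x tendsto_natCast_atTop_atTop).inv_tendsto_atTop
  have h1 : Tendsto (fun n : ℕ => deriv f (x + n) - Real.log (x + n)) atTop (𝓝 0) := by
    refine tendsto_of_tendsto_of_tendsto_of_le_of_le (g := fun n : ℕ => -(1 / (x + (n:ℝ))))
      (h := fun _ => 0) (by simpa using hinv.neg) tendsto_const_nhds ?_ ?_
    · intro n
      have := hlow (x + n) (by positivity)
      simp only; linarith
    · intro n
      have := hUB (x + n) (by positivity)
      simp only; linarith
  have h2 : Tendsto (fun n : ℕ => Real.log (x + n) - Real.log n) atTop (𝓝 0) := by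
    have h3 : Tendsto (fun n : ℕ => Real.log (x / n + 1)) atTop (𝓝 0) := by
      have h4 : Tendsto (fun n : ℕ => x / (n:ℝ) + 1) atTop (𝓝 1) := by
        simpa using (tendsto_const_div_atTop_nhds_zero_nat x).add_const 1
      simpa using h4.log one_ne_zero
    refine h3.congr' ?_
    filter_upwards [eventually_gt_atTop 0] with n hn
    have hn' : (0:ℝ) < n := by exact_mod_cast hn
    rw [← Real.log_div (by positivity) hn'.ne']
    congr 1
    field_simp
  have h5 := ((h1.add h2).sub Real.tendsto_harmonic_sub_log).sub_const (digamma x)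
  simp only [add_zero, zero_sub] at h5
  refine h5.congr fun n => ?_
  rw [hsum, Finset.sum_sub_distrib, harmonic]
  push_cast
  simp only [one_div]
  ring

open Filter Topology Set MeasureTheory in
lemma sum_lim_int :
    Tendsto (fun n : ℕ => ∑ k ∈ Finset.range n, (1 / ((3/5:ℝ) + k) - 1 / ((k : ℝ) + 1))) atTop
      (𝓝 (∫ u in (0:ℝ)..1, 5 * (u^2+u^3) / (1+u+u^2+u^3+u^4))) := by
  have hpos (u : ℝ) : 0 < 1+u+u^2+u^3+u^4 := by
    nlinarith [sq_nonneg (u^2+u/2), sq_nonneg (u/2+1), sq_nonneg u, sq_nonneg (u+1)]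
  have hcont : Continuous fun u : ℝ => 5 * (u^2+u^3) / (1+u+u^2+u^3+u^4) :=
    Continuous.div (by fun_prop) (by fun_prop) fun u => (hpos u).ne'
  have hS (n : ℕ) : ∑ k ∈ Finset.range n, (1 / ((3/5:ℝ) + k) - 1 / ((k : ℝ) + 1)) =
      ∫ u in (0:ℝ)..1, (1 - u^(5*n)) * (5 * (u^2+u^3) / (1+u+u^2+u^3+u^4)) := by
    have e (u : ℝ) : (1 - u^(5*n)) * (5 * (u^2+u^3) / (1+u+u^2+u^3+u^4)) =
        ∑ k ∈ Finset.range n, (5 * u^(5*k+2) - 5 * u^(5*k+4)) := by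
      induction n with
      | zero => simp
      | succ n ih =>
        rw [Finset.sum_range_succ, ← ih]
        have := (hpos u).ne'
        field_simp
        ring
    simp_rw [e]
    rw [intervalIntegral.integral_finsetSum]
    · refine Finset.sum_congr rfl fun k _ => ?_
      rw [intervalIntegral.integral_sub (Continuous.intervalIntegrable (by fun_prop) _ _)
        (Continuous.intervalIntegrable (by fun_prop) _ _),
        intervalIntegral.integral_const_mul, intervalIntegral.integral_const_mul,
        integral_pow, integral_pow]
      have : (0:ℝ) ≤ k := k.cast_nonneg
      push_cast
      simp
      have h1 : (3/5:ℝ) + k ≠ 0 := by positivity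
      have h2 : (k:ℝ) + 1 ≠ 0 := by positivity
      have h3 : 5 * (k:ℝ) + 2 + 1 ≠ 0 := by positivity
      have h4 : 5 * (k:ℝ) + 4 + 1 ≠ 0 := by positivity
      field_simp
      ring
    · intro k _
      exact Continuous.intervalIntegrable (by fun_prop) _ _
  have hE (n : ℕ) : ∑ k ∈ Finset.range n, (1 / ((3/5:ℝ) + k) - 1 / ((k : ℝ) + 1)) =
      (∫ u in (0:ℝ)..1, 5 * (u^2+u^3) / (1+u+u^2+u^3+u^4)) -
      ∫ u in (0:ℝ)..1, u^(5*n) * (5 * (u^2+u^3) / (1+u+u^2+u^3+u^4)) := by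
    rw [hS, ← intervalIntegral.integral_sub (hcont.intervalIntegrable _ _)
      (Continuous.intervalIntegrable (by fun_prop) _ _)]
    congr 1
    ext u
    ring
  have h0 : Tendsto (fun n : ℕ => ∫ u in (0:ℝ)..1,
      u^(5*n) * (5 * (u^2+u^3) / (1+u+u^2+u^3+u^4))) atTop (𝓝 0) := by
    have hb : Tendsto (fun n : ℕ => (5:ℝ) / (n + 1)) atTop (𝓝 0) := by
      have := (tendsto_one_div_add_atTop_nhds_zero_nat (𝕜 := ℝ)).const_mul 5
      simpa [div_eq_mul_inv] using this
    refine tendsto_of_tendsto_of_tendsto_of_le_of_le tendsto_const_nhds hb ?_ ?_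
    · intro n
      refine intervalIntegral.integral_nonneg (by norm_num) fun u hu => ?_
      have := hu.1
      have := hpos u
      positivity
    · intro n
      have : ∫ u in (0:ℝ)..1, u^(5*n) * (5 * (u^2+u^3) / (1+u+u^2+u^3+u^4)) ≤
          ∫ u in (0:ℝ)..1, u^(5*n) * 5 := by
        refine intervalIntegral.integral_mono_on (by norm_num)
          (Continuous.intervalIntegrable (by fun_prop) _ _)
          (Continuous.intervalIntegrable (by fun_prop) _ _) fun u hu => ?_
        have h0 := hu.1
        have : 0 ≤ u^4 := by positivity
        gcongr
        rw [div_le_iff₀ (hpos u)]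
        nlinarith
      refine this.trans ?_
      rw [intervalIntegral.integral_mul_const, integral_pow]
      simp
      rw [← div_eq_inv_mul]
      gcongr
      have : (0:ℝ) ≤ n := n.cast_nonneg
      linarith
  have := h0.const_sub (∫ u in (0:ℝ)..1, 5 * (u^2+u^3) / (1+u+u^2+u^3+u^4))
  rw [sub_zero] at this
  exact this.congr fun n => (hE n).symm

lemma q_pos (θ u : ℝ) (h0 : 0 < θ) (h1 : θ < Real.pi) :
    0 < u^2 - 2 * u * Real.cos θ + 1 := by
  have := Real.sin_pos_of_pos_of_lt_pi h0 h1
  nlinarith [Real.sin_sq_add_cos_sq θ, sq_nonneg (u - Real.cos θ)]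

lemma arctan_deriv (θ u : ℝ) (h0 : 0 < θ) (h1 : θ < Real.pi) :
    HasDerivAt (fun u => Real.arctan ((u - Real.cos θ) / Real.sin θ))
      (Real.sin θ / (u^2 - 2 * u * Real.cos θ + 1)) u := by
  have hs := Real.sin_pos_of_pos_of_lt_pi h0 h1
  have hq := q_pos θ u h0 h1
  have h := (((hasDerivAt_id u).sub_const (Real.cos θ)).div_const (Real.sin θ)).arctan
  refine h.congr_deriv ?_
  have e : u^2 - 2 * u * Real.cos θ + 1 = Real.sin θ ^ 2 + (u - Real.cos θ)^2 := by
    rw [Real.sin_sq]; ring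
  rw [e] at hq ⊢
  simp only [id]
  have : 1 + ((u - Real.cos θ) / Real.sin θ)^2 ≠ 0 := by positivity
  field_simp

lemma log_deriv (θ u : ℝ) (h0 : 0 < θ) (h1 : θ < Real.pi) :
    HasDerivAt (fun u => Real.log (u^2 - 2 * u * Real.cos θ + 1))
      ((2 * u - 2 * Real.cos θ) / (u^2 - 2 * u * Real.cos θ + 1)) u := by
  have hq := q_pos θ u h0 h1
  refine HasDerivAt.log ?_ hq.ne'
  have := (((hasDerivAt_id u).pow 2).sub
    (((hasDerivAt_id u).const_mul 2).mul_const (Real.cos θ))).add_const 1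
  refine this.congr_deriv ?_
  simp

lemma arctan_diff (θ : ℝ) (h0 : 0 < θ) (h1 : θ < Real.pi) :
    Real.arctan ((1 - Real.cos θ) / Real.sin θ) -
      Real.arctan ((0 - Real.cos θ) / Real.sin θ) = (Real.pi - θ) / 2 := by
  have hs := Real.sin_pos_of_pos_of_lt_pi h0 h1
  have a : (1 - Real.cos θ) / Real.sin θ = Real.tan (θ / 2) := by
    have hc : 0 < Real.cos (θ/2) := Real.cos_pos_of_mem_Ioo ⟨by linarith, by linarith⟩
    have hs' : 0 < Real.sin (θ/2) := Real.sin_pos_of_pos_of_lt_pi (by linarith) (by linarith)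
    have e : θ = 2 * (θ/2) := by ring
    rw [Real.tan_eq_sin_div_cos]
    conv_lhs => rw [e, Real.cos_two_mul, Real.sin_two_mul]
    rw [div_eq_div_iff (by positivity) hc.ne']
    have := Real.sin_sq_add_cos_sq (θ/2)
    linear_combination (-2 * Real.cos (θ/2)) * this
  have b : (0 - Real.cos θ) / Real.sin θ = Real.tan (θ - Real.pi / 2) := by
    rw [Real.tan_eq_sin_div_cos, Real.sin_sub_pi_div_two, Real.cos_sub_pi_div_two]
    simp
  rw [a, b, Real.arctan_tan (by linarith) (by linarith),
    Real.arctan_tan (by linarith) (by linarith)]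
  ring

lemma int_val : ∫ u in (0:ℝ)..1, 5 * (u^2+u^3) / (1+u+u^2+u^3+u^4) =
    -((Real.pi / 2) * Real.sqrt (1 - 2 / Real.sqrt 5)
        - (5 / 4) * Real.log 5
        + (Real.sqrt 5 / 4) * Real.log ((3 + Real.sqrt 5) / 2)) := by
  have hpi := Real.pi_pos
  have hpos (u : ℝ) : 0 < 1+u+u^2+u^3+u^4 := by
    nlinarith [sq_nonneg (u^2+u/2), sq_nonneg (u/2+1), sq_nonneg u, sq_nonneg (u+1)]
  have hcont : Continuous fun u : ℝ => 5 * (u^2+u^3) / (1+u+u^2+u^3+u^4) :=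
    Continuous.div (by fun_prop) (by fun_prop) fun u => (hpos u).ne'
  obtain ⟨θ, hθ⟩ : ∃ θ : ℝ, θ = 2 * (Real.pi / 5) := ⟨_, rfl⟩
  have r5 : Real.sqrt 5 ^ 2 = 5 := Real.sq_sqrt (by norm_num)
  have r5lo : 2 < Real.sqrt 5 := Real.lt_sqrt_of_sq_lt (by norm_num)
  have r5hi : Real.sqrt 5 < 3 := by
    rw [Real.sqrt_lt' (by norm_num)]; norm_num
  have c1 : Real.cos θ = (Real.sqrt 5 - 1) / 4 := by
    rw [hθ, Real.cos_two_mul, Real.cos_pi_div_five]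
    linear_combination r5 / 8
  have c2 : Real.cos (2 * θ) = -(1 + Real.sqrt 5) / 4 := by
    rw [Real.cos_two_mul, c1]
    linear_combination r5 / 8
  have s2 : Real.sin (2 * θ) = Real.sin θ * (Real.sqrt 5 - 1) / 2 := by
    rw [Real.sin_two_mul, c1]; ring
  have ht0 : 0 < θ := by rw [hθ]; positivity
  have ht1 : θ < Real.pi := by linarith
  have hu0 : 0 < 2 * θ := by positivity
  have hu1 : 2 * θ < Real.pi := by linarith
  have hs := Real.sin_pos_of_pos_of_lt_pi ht0 ht1
  have ss : Real.sin θ ^ 2 = (5 + Real.sqrt 5) / 8 := by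
    rw [Real.sin_sq, c1]; linear_combination -r5 / 16
  have hF (u : ℝ) := ((((log_deriv θ u ht0 ht1).const_mul (1 - Real.cos (2*θ))).add
    ((log_deriv (2*θ) u hu0 hu1).const_mul (1 - Real.cos θ))).sub
    ((arctan_deriv θ u ht0 ht1).const_mul (2 * Real.sin (2 * θ)))).add
    ((arctan_deriv (2*θ) u hu0 hu1).const_mul (2 * Real.sin θ))
  have hI := intervalIntegral.integral_eq_sub_of_hasDerivAt (a := 0) (b := 1)
    (f' := fun u : ℝ => 5 * (u^2+u^3) / (1+u+u^2+u^3+u^4))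
    (fun u _ => (hF u).congr_deriv (by
      have q1 := (q_pos θ u ht0 ht1).ne'
      have q2 := (q_pos (2*θ) u hu0 hu1).ne'
      have e : 1+u+u^2+u^3+u^4 = (u^2 - 2 * u * Real.cos θ + 1) *
          (u^2 - 2 * u * Real.cos (2*θ) + 1) := by
        rw [c1, c2]; linear_combination (u^2/4) * r5
      rw [e]
      have t1 : Real.sin (2*θ) * Real.sin θ = Real.sqrt 5 / 4 := by
        rw [s2]; linear_combination (Real.sqrt 5 - 1)/2 * ss + r5/16
      have num : (1 - Real.cos (2*θ)) * (2*u - 2 * Real.cos θ) * (u^2 - 2 * u * Real.cos (2*θ) + 1)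
          + (1 - Real.cos θ) * (2*u - 2 * Real.cos (2*θ)) * (u^2 - 2 * u * Real.cos θ + 1)
          - 2 * (Real.sin (2*θ) * Real.sin θ) * (u^2 - 2 * u * Real.cos (2*θ) + 1)
          + 2 * (Real.sin (2*θ) * Real.sin θ) * (u^2 - 2 * u * Real.cos θ + 1)
          = 5 * (u^2+u^3) := by
        rw [t1, c1, c2]
        grind
      rw [← num]
      generalize u^2 - 2 * u * Real.cos θ + 1 = Q1 at *
      generalize u^2 - 2 * u * Real.cos (2*θ) + 1 = Q2 at *
      field_simp)) (hcont.intervalIntegrable _ _)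
  rw [hI]
  have A1 := arctan_diff θ ht0 ht1
  have A2 := arctan_diff (2*θ) hu0 hu1
  have L1 : Real.log 5 = Real.log (2 - 2 * Real.cos θ) + Real.log (2 - 2 * Real.cos (2 * θ)) := by
    rw [← Real.log_mul (by rw [c1]; linarith) (by rw [c2]; linarith), c1, c2]
    congr 1
    linear_combination r5/4
  have L2 : Real.log ((3 + Real.sqrt 5) / 2) =
      Real.log (2 - 2 * Real.cos (2 * θ)) - Real.log (2 - 2 * Real.cos θ) := by
    have h1 : 2 - 2 * Real.cos θ ≠ 0 := by rw [c1]; linarith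
    rw [← Real.log_div (by rw [c2]; linarith) h1]
    congr 1
    rw [eq_div_iff h1, c1, c2]
    linear_combination -r5/4
  have W : Real.sqrt (1 - 2 / Real.sqrt 5) = Real.sin θ * (3 * Real.sqrt 5 - 5) / 5 := by
    rw [Real.sqrt_eq_iff_mul_self_eq_of_pos]
    · have : 2 / Real.sqrt 5 = 2 * Real.sqrt 5 / 5 := by
        field_simp; linear_combination -r5
      rw [this]
      linear_combination (3 * Real.sqrt 5 - 5)^2/25 * ss + (9 * Real.sqrt 5 + 15)/200 * r5
    · have : 0 < 3 * Real.sqrt 5 - 5 := by linarith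
      positivity
  have g1 : (1:ℝ)^2 - 2 * 1 * Real.cos θ + 1 = 2 - 2 * Real.cos θ := by ring
  have g2 : (1:ℝ)^2 - 2 * 1 * Real.cos (2*θ) + 1 = 2 - 2 * Real.cos (2*θ) := by ring
  have g3 : (0:ℝ)^2 - 2 * 0 * Real.cos θ + 1 = 1 := by ring
  have g4 : (0:ℝ)^2 - 2 * 0 * Real.cos (2*θ) + 1 = 1 := by ring
  simp only [Pi.add_apply, Pi.sub_apply]
  rw [g1, g2, g3, g4, Real.log_one, W, L1, L2]
  have hp : Real.pi = 5 * θ / 2 := by rw [hθ]; ring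
  rw [hp] at A1 A2 ⊢
  generalize Real.log (2 - 2 * Real.cos θ) = l1
  generalize Real.log (2 - 2 * Real.cos (2*θ)) = l2
  generalize Real.arctan ((1 - Real.cos θ) / Real.sin θ) = a1 at *
  generalize Real.arctan ((0 - Real.cos θ) / Real.sin θ) = a2 at *
  generalize Real.arctan ((1 - Real.cos (2*θ)) / Real.sin (2*θ)) = b1 at *
  generalize Real.arctan ((0 - Real.cos (2*θ)) / Real.sin (2*θ)) = b2 at *
  rw [s2, c1, c2]
  linear_combination (-Real.sin θ * (Real.sqrt 5 - 1)) * A1 + 2 * Real.sin θ * A2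

theorem digamma_three_fifths :
    digamma (3 / 5) =
      -Real.eulerMascheroniConstant
        + (Real.pi / 2) * Real.sqrt (1 - 2 / Real.sqrt 5)
        - (5 / 4) * Real.log 5
        + (Real.sqrt 5 / 4) * Real.log ((3 + Real.sqrt 5) / 2) := by
  have h := tendsto_nhds_unique (digamma_lim (3/5) (by norm_num)) sum_lim_int
  rw [int_val] at h
  linarith
end

section
/- ψ(1/8) = −γ − (1 + √2)·(π/2) − 4·ln 2 − √2·ln(1 + √2), where ψ is the digamma function and γ is the Euler–Mascheroni constant. -/
open Real Filter Topology Finset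

theorem mono_aux (G g : ℝ → ℝ) (h : ∀ t ∈ Set.Icc (0:ℝ) 1, HasDerivAt G (g t) t)
    (hg : ∀ t ∈ Set.Icc (0:ℝ) 1, 0 ≤ g t) : G 0 ≤ G 1 := by
  have : MonotoneOn G (Set.Icc 0 1) := by
    refine monotoneOn_of_hasDerivWithinAt_nonneg (f' := g) (convex_Icc 0 1)
      (fun t ht => (h t ht).continuousAt.continuousWithinAt) ?_ ?_
    · intro t ht; exact (h t (interior_subset ht)).hasDerivWithinAt
    · intro t ht; exact hg t (interior_subset ht)
  exact this (by simp) (by simp) zero_le_one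

noncomputable def FF (t : ℝ) : ℝ := 2 * log (1 + t) + log (1 + t^2) + 2 * arctan t
  + (2 - √2) / 2 * log (t^2 - √2 * t + 1) + √2 * arctan (√2 * t - 1)
  + (2 + √2) / 2 * log (t^2 + √2 * t + 1) + √2 * arctan (√2 * t + 1)

noncomputable def ff (t : ℝ) : ℝ := 2 / (1 + t) + 2 * (t + 1) / (1 + t^2)
  + (2 - √2) * (t + 1) / (t^2 - √2 * t + 1) + (2 + √2) * (t + 1) / (t^2 + √2 * t + 1)

theorem s2 : √2 * √2 = 2 := Real.mul_self_sqrt (by norm_num)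
theorem s2a : 1 < √2 := by nlinarith [s2, Real.sqrt_nonneg 2]
theorem s2b : √2 < 2 := by nlinarith [s2, Real.sqrt_nonneg 2]

theorem q1 (t : ℝ) : 1/2 ≤ t^2 - √2 * t + 1 := by nlinarith [s2, sq_nonneg (2 * t - √2)]
theorem q2 (t : ℝ) : 1/2 ≤ t^2 + √2 * t + 1 := by nlinarith [s2, sq_nonneg (2 * t + √2)]

theorem FF_deriv (t : ℝ) (ht : 0 ≤ t) : HasDerivAt FF (ff t) t := by
  have p1 := q1 t
  have p2 := q2 t
  have e := s2
  have hid := hasDerivAt_id' t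
  have hsq : HasDerivAt (fun t : ℝ => t^2) (2 * t) t := by simpa using hasDerivAt_pow 2 t
  have hl := hid.const_mul (√2)
  have h1 := ((hid.const_add 1).log (by positivity)).const_mul 2
  have h2 := (hsq.const_add 1).log (by positivity)
  have h3 := hid.arctan.const_mul 2
  have h4 := (((hsq.sub hl).add_const 1).log (by simp; linarith)).const_mul ((2 - √2) / 2)
  have h5 := (hl.sub_const 1).arctan.const_mul (√2)
  have h6 := (((hsq.add hl).add_const 1).log (by simp; linarith)).const_mul ((2 + √2) / 2)
  have h7 := (hl.add_const 1).arctan.const_mul (√2)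
  refine ((((((h1.add h2).add h3).add h4).add h5).add h6).add h7).congr_deriv ?_
  have e1 : 1 + (√2 * t - 1)^2 = 2 * (t^2 - √2 * t + 1) := by linear_combination t^2 * e
  have e2 : 1 + (√2 * t + 1)^2 = 2 * (t^2 + √2 * t + 1) := by linear_combination t^2 * e
  rw [e1, e2]
  have n1 : t^2 - √2 * t + 1 ≠ 0 := by linarith
  have n2 : t^2 + √2 * t + 1 ≠ 0 := by linarith
  have n3 : 1 + t ≠ 0 := by linarith
  have n4 : 1 + t^2 ≠ 0 := by positivity
  have a1 : (2 - √2) / 2 * ((2 * t - √2 * 1) / (t^2 - √2 * t + 1))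
      + √2 * (1 / (2 * (t^2 - √2 * t + 1)) * (√2 * 1)) = (2 - √2) * (t + 1) / (t^2 - √2 * t + 1) := by
    field_simp; ring_nf; simp only [Real.sq_sqrt (show (0:ℝ) ≤ 2 by norm_num)]; ring
  have a2 : (2 + √2) / 2 * ((2 * t + √2 * 1) / (t^2 + √2 * t + 1))
      + √2 * (1 / (2 * (t^2 + √2 * t + 1)) * (√2 * 1)) = (2 + √2) * (t + 1) / (t^2 + √2 * t + 1) := by
    field_simp; ring_nf; simp only [Real.sq_sqrt (show (0:ℝ) ≤ 2 by norm_num)]; ring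
  have a3 : 2 * t / (1 + t^2) + 2 * (1 / (1 + t^2) * 1) = 2 * (t + 1) / (1 + t^2) := by
    field_simp
  unfold ff
  rw [← a1, ← a2, ← a3]
  simp only [Pi.add_apply, Pi.sub_apply]
  ring

theorem ff_eq (t : ℝ) (ht : 0 ≤ t) :
    ff t * (1 - t^8) = 8 * (1 - t^7) := by
  have e := s2
  have n1 : t^2 - √2 * t + 1 ≠ 0 := by linarith [q1 t]
  have n2 : t^2 + √2 * t + 1 ≠ 0 := by linarith [q2 t]
  have n3 : 1 + t ≠ 0 := by linarith
  have n4 : 1 + t^2 ≠ 0 := by positivity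
  have e4 : (t^2 - √2 * t + 1) * (t^2 + √2 * t + 1) = 1 + t^4 := by linear_combination -t^2 * e
  have n5 : 1 + t^4 ≠ 0 := by positivity
  have a : (2 - √2) * (t + 1) / (t^2 - √2 * t + 1) + (2 + √2) * (t + 1) / (t^2 + √2 * t + 1)
     = 4 * (t+1) * (1 + t^2 - t) / (1 + t^4) := by
    rw [div_add_div _ _ n1 n2, e4]
    congr 1
    linear_combination (-2 * t * (t+1)) * e
  unfold ff
  rw [add_assoc, a]
  field_simp
  ring

theorem ff_nonneg (t : ℝ) (ht : 0 ≤ t) : 0 ≤ ff t := by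
  have p1 := q1 t
  have p2 := q2 t
  have := s2b
  have h1 : 0 ≤ (2 - √2) * (t + 1) / (t^2 - √2 * t + 1) :=
    div_nonneg (mul_nonneg (by linarith) (by linarith)) (by linarith)
  have h2 : 0 ≤ (2 + √2) * (t + 1) / (t^2 + √2 * t + 1) :=
    div_nonneg (mul_nonneg (by linarith [s2a]) (by linarith)) (by linarith)
  have h3 : 0 ≤ 2 / (1 + t) + 2 * (t + 1) / (1 + t^2) := by positivity
  unfold ff; linarith

theorem ff_le (t : ℝ) (ht : 0 ≤ t) (ht1 : t ≤ 1) : ff t ≤ 40 := by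
  have p1 := q1 t
  have p2 := q2 t
  have := s2b
  have := s2a
  have h1 : (2 - √2) * (t + 1) / (t^2 - √2 * t + 1) ≤ 8 := by
    rw [div_le_iff₀ (by linarith)]; nlinarith
  have h2 : (2 + √2) * (t + 1) / (t^2 + √2 * t + 1) ≤ 16 := by
    rw [div_le_iff₀ (by linarith)]; nlinarith
  have h3 : 2 / (1 + t) ≤ 2 := by rw [div_le_iff₀ (by linarith)]; nlinarith
  have h4 : 2 * (t + 1) / (1 + t^2) ≤ 4 := by rw [div_le_iff₀ (by positivity)]; nlinarith
  unfold ff; linarith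

noncomputable def PP (n : ℕ) (t : ℝ) : ℝ :=
  ∑ k ∈ range n, (8 * (t^(8*k+1) / (8*k+1)) - t^(8*k+8) / (k+1))

theorem PP_deriv (n : ℕ) (t : ℝ) :
    HasDerivAt (PP n) (∑ k ∈ range n, 8 * (t^(8*k) - t^(8*k+7))) t := by
  unfold PP
  refine HasDerivAt.fun_sum fun k _ => ?_
  have h1 := ((hasDerivAt_pow (8*k+1) t).div_const (8*k+1)).const_mul 8
  have h2 := (hasDerivAt_pow (8*k+8) t).div_const ((k:ℝ)+1)
  refine (h1.sub h2).congr_deriv ?_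
  have : (8*(k:ℝ)+1) ≠ 0 := by positivity
  have : ((k:ℝ)+1) ≠ 0 := by positivity
  simp only [Nat.add_sub_cancel, show 8*k+8-1 = 8*k+7 by omega]
  push_cast
  field_simp

theorem geo (n : ℕ) (t : ℝ) :
    (∑ k ∈ range n, 8 * (t^(8*k) - t^(8*k+7))) * (1 - t^8) = 8 * (1 - t^7) * (1 - t^(8*n)) := by
  induction n with
  | zero => simp
  | succ n ih => rw [sum_range_succ, add_mul, ih]; ring

theorem FP_deriv (n : ℕ) (t : ℝ) (ht : t ∈ Set.Icc (0:ℝ) 1) (h1 : t ≠ 1) :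
    ff t - (∑ k ∈ range n, 8 * (t^(8*k) - t^(8*k+7))) = t^(8*n) * ff t := by
  have h : 1 - t^8 ≠ 0 := by
    have : t^8 < 1 := pow_lt_one₀ ht.1 (lt_of_le_of_ne ht.2 h1) (by norm_num)
    linarith
  apply mul_right_cancel₀ h
  linear_combination (1 - t^(8*n)) * ff_eq t ht.1 - geo n t

theorem FP_bound (n : ℕ) (t : ℝ) (ht : t ∈ Set.Icc (0:ℝ) 1) :
    0 ≤ ff t - (∑ k ∈ range n, 8 * (t^(8*k) - t^(8*k+7))) ∧
    ff t - (∑ k ∈ range n, 8 * (t^(8*k) - t^(8*k+7))) ≤ 40 * t^(8*n) := by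
  have h0 := ff_nonneg t ht.1
  by_cases h1 : t = 1
  · subst h1; simp; exact ⟨h0, ff_le 1 (by simp) le_rfl⟩
  · rw [FP_deriv n t ht h1]
    have := pow_nonneg ht.1 (8*n)
    exact ⟨by positivity, by nlinarith [ff_le t ht.1 ht.2]⟩

theorem FP_lim : Tendsto (fun n => PP n 1) atTop (𝓝 (FF 1 - FF 0)) := by
  have z : ∀ n, PP n 0 = 0 := by intro n; simp [PP]
  have lo : ∀ n, PP n 1 ≤ FF 1 - FF 0 := by
    intro n
    have := mono_aux (fun t => FF t - PP n t) _
      (fun t ht => (FF_deriv t ht.1).sub (PP_deriv n t)) (fun t ht => (FP_bound n t ht).1)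
    simp only [z] at this; linarith
  have hi : ∀ n : ℕ, FF 1 - FF 0 - 40 * (1 / (8 * n + 1)) ≤ PP n 1 := by
    intro n
    have := mono_aux (fun t => 40 * (t^(8*n+1) / (8*n+1)) - (FF t - PP n t)) 
      (fun t => 40 * t^(8*n) - (ff t - (∑ k ∈ range n, 8 * (t^(8*k) - t^(8*k+7)))))
      (fun t ht => by
        refine HasDerivAt.sub ?_ ((FF_deriv t ht.1).sub (PP_deriv n t))
        have h1 := ((hasDerivAt_pow (8*n+1) t).div_const (8*n+1)).const_mul 40
        refine h1.congr_deriv ?_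
        have : (8*(n:ℝ)+1) ≠ 0 := by positivity
        simp only [Nat.add_sub_cancel]
        push_cast
        field_simp) (fun t ht => by linarith [(FP_bound n t ht).2])
    simp [z] at this
    simp only [one_div]; linarith
  refine tendsto_of_tendsto_of_tendsto_of_le_of_le (g := fun n : ℕ => FF 1 - FF 0 - 40 * (1 / (8 * (n:ℝ) + 1))) ?_ tendsto_const_nhds hi lo
  have : Tendsto (fun n : ℕ => 1 / (8 * (n:ℝ) + 1)) atTop (𝓝 0) := by
    simp only [one_div]
    refine tendsto_inv_atTop_zero.comp ?_
    exact tendsto_atTop_add_const_right _ _ (tendsto_natCast_atTop_atTop.const_mul_atTop (by norm_num))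
  simpa using (this.const_mul 40).const_sub (FF 1 - FF 0)

theorem FF_val : FF 1 - FF 0 = (1 + √2) * (π / 2) + 4 * log 2 + √2 * log (1 + √2) := by
  have e := s2
  have := s2a
  have := s2b
  have a : arctan (√2 + 1) = π/2 - arctan (√2 - 1) := by
    rw [← arctan_inv_of_pos (by linarith)]
    congr 1
    apply eq_inv_of_mul_eq_one_left; linear_combination e
  have b : log (2 + √2) = log √2 + log (1 + √2) := by
    rw [← log_mul (by positivity) (by positivity)]; congr 1; linear_combination -e
  have c : log (2 - √2) = log √2 - log (1 + √2) := by
    rw [← log_div (by positivity) (by positivity)]; congr 1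
    rw [eq_div_iff (by positivity)]; linear_combination -e
  have d : log √2 = log 2 / 2 := Real.log_sqrt (by norm_num)
  unfold FF
  have r1 : (1:ℝ)^2 - √2 * 1 + 1 = 2 - √2 := by ring
  have r2 : (1:ℝ)^2 + √2 * 1 + 1 = 2 + √2 := by ring
  have r3 : arctan (-1) = - (π/4) := by rw [arctan_neg, arctan_one]
  rw [r1, r2, b, c]
  simp [a, d, r3, arctan_one]
  norm_num
  ring


theorem dg_deriv (x : ℝ) (hx : 0 < x) : HasDerivAt (log ∘ Gamma) (digamma x) x := by
  have h := (differentiableAt_Gamma (s := x) (fun m => by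
    have : (0:ℝ) ≤ m := m.cast_nonneg
    linarith)).hasDerivAt
  exact h.log (Gamma_pos_of_pos hx).ne'

theorem dg_succ (x : ℝ) (hx : 0 < x) : digamma (x + 1) = digamma x + 1 / x := by
  have h1 := (dg_deriv (x+1) (by linarith)).comp_add_const x 1
  have h2 := (dg_deriv x hx).add (hasDerivAt_log hx.ne')
  rw [one_div]
  refine h1.unique (h2.congr_of_eventuallyEq ?_)
  filter_upwards [lt_mem_nhds hx] with y hy
  simp only [Function.comp, Pi.add_apply]
  rw [Gamma_add_one hy.ne', log_mul hy.ne' (Gamma_pos_of_pos hy).ne', add_comm]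

theorem dg_mono (x y : ℝ) (hx : 0 < x) (hxy : x ≤ y) : digamma x ≤ digamma y := by
  have h := convexOn_log_Gamma.monotoneOn_deriv (fun z hz => (dg_deriv z hz).differentiableAt)
    (Set.mem_Ioi.2 hx) (Set.mem_Ioi.2 (hx.trans_le hxy)) hxy
  rwa [(dg_deriv x hx).deriv, (dg_deriv y (hx.trans_le hxy)).deriv] at h

theorem dg_add (n : ℕ) (x : ℝ) (hx : 0 < x) :
    digamma (x + n) = digamma x + ∑ k ∈ range n, 1 / (x + k) := by
  induction n with
  | zero => simp
  | succ n ih =>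
    rw [sum_range_succ, ← add_assoc, ← ih, ← dg_succ _ (by positivity)]
    push_cast; ring_nf

theorem digamma_one : digamma 1 = -eulerMascheroniConstant := by
  rw [eulerMascheroniConstant_eq_neg_deriv, digamma, Gamma_one]; simp

theorem dg_PP (n : ℕ) : PP n 1 = digamma (1/8 + n) - digamma (1 + n) - (digamma (1/8) - digamma 1) := by
  rw [dg_add _ _ (by norm_num), dg_add _ _ (by norm_num)]
  have : PP n 1 = ∑ k ∈ range n, 1 / (1/8 + (k:ℝ)) - ∑ k ∈ range n, 1 / (1 + (k:ℝ)) := by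
    rw [PP, ← sum_sub_distrib]
    refine sum_congr rfl fun k _ => ?_
    have : (8*(k:ℝ)+1) ≠ 0 := by positivity
    have : (1 / 8+(k:ℝ)) ≠ 0 := by positivity
    have : ((k:ℝ)+1) ≠ 0 := by positivity
    have : (1+(k:ℝ)) ≠ 0 := by positivity
    simp only [one_pow]
    rw [add_comm (1:ℝ) (k:ℝ)]
    congr 1
    field_simp
    ring
  rw [this]; ring

theorem dg_lim : Tendsto (fun n : ℕ => digamma (1/8 + n) - digamma (1 + n)) atTop (𝓝 0) := by
  have key : Tendsto (fun n : ℕ => -(1 / (n:ℝ))) atTop (𝓝 0) := by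
    simpa using (tendsto_one_div_atTop_nhds_zero_nat (𝕜 := ℝ)).neg
  refine tendsto_of_tendsto_of_tendsto_of_le_of_le' key tendsto_const_nhds ?_ ?_
  · filter_upwards [eventually_gt_atTop 0] with n hn
    have hn' : (0:ℝ) < n := by exact_mod_cast hn
    have h1 := dg_succ n hn'
    have h2 := dg_mono n (1/8 + n) hn' (by linarith)
    rw [add_comm (1:ℝ)]; linarith
  · refine Eventually.of_forall fun n => ?_
    have := dg_mono (1/8 + n) (1 + n) (by positivity) (by linarith)
    linarith

theorem digamma_one_eighth :
    digamma (1 / 8) =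
      -Real.eulerMascheroniConstant - (1 + Real.sqrt 2) * (Real.pi / 2)
        - 4 * Real.log 2 - Real.sqrt 2 * Real.log (1 + Real.sqrt 2) := by
  have h := FP_lim
  simp only [dg_PP] at h
  have h2 := dg_lim.sub_const (digamma (1/8) - digamma 1)
  have := tendsto_nhds_unique h h2
  rw [FF_val, digamma_one] at this
  linarith
end

section
/- ψ(11/12) = −γ − ln 24 + (2 + √3)·(π/2) + √3·ln(2 − √3) − ln √3, where ψ is the digamma function and γ is the Euler–Mascheroni constant. -/
lemma dg_hasDerivAt {y : ℝ} (hy : 0 < y) : HasDerivAt (Real.log ∘ Real.Gamma) (digamma y) y := by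
  have hd : DifferentiableAt ℝ Real.Gamma y :=
    Real.differentiableAt_Gamma fun m => by
      have : (0:ℝ) ≤ m := m.cast_nonneg
      intro h
      linarith
  exact hd.hasDerivAt.log (Real.Gamma_pos_of_pos hy).ne'

lemma dg_feq {y : ℝ} (hy : 0 < y) :
    (Real.log ∘ Real.Gamma) (y + 1) = (Real.log ∘ Real.Gamma) y + Real.log y := by
  simp only [Function.comp]
  rw [Real.Gamma_add_one hy.ne', Real.log_mul hy.ne' (Real.Gamma_pos_of_pos hy).ne']
  ring

lemma dg_add_one {y : ℝ} (hy : 0 < y) : digamma (y + 1) = digamma y + 1 / y := by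
  have h1 : HasDerivAt (fun z => (Real.log ∘ Real.Gamma) (z + 1)) (digamma (y + 1)) y :=
    (dg_hasDerivAt (by linarith : 0 < y + 1)).comp_add_const y 1
  have h2 : HasDerivAt (fun z => (Real.log ∘ Real.Gamma) z + Real.log z)
      (digamma y + y⁻¹) y := (dg_hasDerivAt hy).add (Real.hasDerivAt_log hy.ne')
  have h3 : (fun z => (Real.log ∘ Real.Gamma) (z + 1)) =ᶠ[nhds y]
      (fun z => (Real.log ∘ Real.Gamma) z + Real.log z) := by
    filter_upwards [lt_mem_nhds hy] with z hz
    exact dg_feq hz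
  rw [one_div]
  exact (h2.congr_of_eventuallyEq h3).unique h1 |>.symm

lemma dg_le {y : ℝ} (hy : 0 < y) : digamma y ≤ Real.log y := by
  have h := Real.convexOn_log_Gamma.le_slope_of_hasDerivAt (x := y) (y := y + 1) hy
    (by simp only [Set.mem_Ioi]; linarith) (by linarith) (dg_hasDerivAt hy)
  rw [slope_def_field, dg_feq hy] at h
  simpa using h

lemma dg_ge {y : ℝ} (hy : 0 < y) : Real.log y ≤ digamma (y + 1) := by
  have h := Real.convexOn_log_Gamma.slope_le_of_hasDerivAt (x := y) (y := y + 1) hy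
    (by simp only [Set.mem_Ioi]; linarith) (by linarith) (dg_hasDerivAt (by linarith))
  rw [slope_def_field, dg_feq hy] at h
  simpa using h

lemma dg_sum {x : ℝ} (hx : 0 < x) (n : ℕ) :
    digamma (x + n) = digamma x + ∑ k ∈ Finset.range n, 1 / (x + k) := by
  induction n with
  | zero => simp
  | succ n ih =>
    have hp : 0 < x + n := by positivity
    rw [Finset.sum_range_succ, ← add_assoc, ← ih, ← dg_add_one hp]
    push_cast
    ring_nf

lemma dg_tendsto_log : Filter.Tendsto (fun n : ℕ => digamma (11 / 12 + n) - Real.log n)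
    Filter.atTop (nhds 0) := by
  have a := (Real.tendsto_log_comp_add_sub_log (11 / 12)).comp tendsto_natCast_atTop_atTop
  have b := (Real.tendsto_log_comp_add_sub_log (-1 / 12)).comp tendsto_natCast_atTop_atTop
  refine tendsto_of_tendsto_of_tendsto_of_le_of_le' b a ?_ ?_
  · filter_upwards [Filter.eventually_ge_atTop 1] with n hn
    have hn' : (1:ℝ) ≤ n := by exact_mod_cast hn
    have := dg_ge (y := (n:ℝ) + -1 / 12) (by linarith)
    rw [show (n:ℝ) + -1 / 12 + 1 = 11 / 12 + n by ring] at this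
    simp only [Function.comp]
    linarith
  · filter_upwards with n
    have hn' : (0:ℝ) ≤ n := n.cast_nonneg
    have := dg_le (y := (n:ℝ) + 11 / 12) (by linarith)
    rw [add_comm] at this
    simp only [Function.comp]
    rw [add_comm (n:ℝ)]  at *
    linarith

lemma dg_tendsto : Filter.Tendsto
    (fun n : ℕ => ∑ k ∈ Finset.range n, (1 / ((k:ℝ) + 1) - 1 / (11 / 12 + (k:ℝ))))
    Filter.atTop (nhds (digamma (11 / 12) + Real.eulerMascheroniConstant)) := by
  have h1 := Real.tendsto_harmonic_sub_log
  have h := (h1.sub dg_tendsto_log).add_const (digamma (11 / 12))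
  rw [sub_zero, add_comm] at h
  refine h.congr fun n => ?_
  rw [dg_sum (by norm_num), Finset.sum_sub_distrib]
  simp only [harmonic]
  push_cast
  simp only [one_div]
  ring

/-- the function whose increments we use -/
noncomputable def dgG (t u : ℝ) : ℝ :=
  (1 - Real.cos t) * Real.log (u ^ 2 - 2 * Real.cos t * u + 1)
    - 2 * Real.sin t * Real.arctan ((u - Real.cos t) / Real.sin t)

lemma dgG_pos {t : ℝ} (h0 : 0 < t) (h1 : t < Real.pi) (u : ℝ) :
    0 < u ^ 2 - 2 * Real.cos t * u + 1 := by
  have hs := Real.sin_pos_of_pos_of_lt_pi h0 h1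
  nlinarith [Real.sin_sq_add_cos_sq t, sq_nonneg (u - Real.cos t), pow_pos hs 2]

lemma dgG_deriv {t : ℝ} (h0 : 0 < t) (h1 : t < Real.pi) (u : ℝ) :
    HasDerivAt (dgG t) ((2 * (1 - Real.cos t) * u + 4 * Real.cos t ^ 2 - 2 * Real.cos t - 2)
      / (u ^ 2 - 2 * Real.cos t * u + 1)) u := by
  have hs := Real.sin_pos_of_pos_of_lt_pi h0 h1
  have hp := dgG_pos h0 h1 u
  have hsc := Real.sin_sq_add_cos_sq t
  have hq : HasDerivAt (fun u : ℝ => u ^ 2 - 2 * Real.cos t * u + 1) (2 * u - 2 * Real.cos t) u := by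
    have := (((hasDerivAt_id u).pow 2).sub ((hasDerivAt_id u).const_mul (2 * Real.cos t))).add_const 1
    simpa using this
  have ha : HasDerivAt (fun u : ℝ => (u - Real.cos t) / Real.sin t) (1 / Real.sin t) u :=
    ((hasDerivAt_id u).sub_const _).div_const _
  have := ((hq.log hp.ne').const_mul (1 - Real.cos t)).sub
    (ha.arctan.const_mul (2 * Real.sin t))
  refine this.congr_deriv ?_
  have e : 1 + ((u - Real.cos t) / Real.sin t) ^ 2
      = (u ^ 2 - 2 * Real.cos t * u + 1) / Real.sin t ^ 2 := by
    field_simp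
    linear_combination hsc
  rw [e]
  set q := u ^ 2 - 2 * Real.cos t * u + 1
  have := hs.ne'
  have := hp.ne'
  field_simp
  linear_combination (-2) * hsc

lemma dgG_diff {t : ℝ} (h0 : 0 < t) (h1 : t < Real.pi) :
    dgG t 1 - dgG t 0 = (1 - Real.cos t) * Real.log (2 - 2 * Real.cos t)
      - Real.sin t * (Real.pi - t) := by
  have hs := Real.sin_pos_of_pos_of_lt_pi h0 h1
  have a1 : Real.arctan ((1 - Real.cos t) / Real.sin t) = t / 2 := by
    have hs2 : 0 < Real.sin (t / 2) := Real.sin_pos_of_pos_of_lt_pi (by linarith) (by linarith)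
    have hc2 : 0 < Real.cos (t / 2) := Real.cos_pos_of_mem_Ioo ⟨by linarith, by linarith⟩
    have e1 : Real.sin t = 2 * Real.sin (t / 2) * Real.cos (t / 2) := by
      rw [← Real.sin_two_mul]; ring_nf
    have e2 : Real.cos t = 2 * Real.cos (t / 2) ^ 2 - 1 := by
      rw [← Real.cos_two_mul]; ring_nf
    have e3 := Real.sin_sq_add_cos_sq (t / 2)
    have : (1 - Real.cos t) / Real.sin t = Real.tan (t / 2) := by
      rw [Real.tan_eq_sin_div_cos, e1, e2]
      field_simp
      linear_combination (-2) * e3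
    rw [this, Real.arctan_tan (by linarith) (by linarith)]
  have a2 : Real.arctan ((0 - Real.cos t) / Real.sin t) = t - Real.pi / 2 := by
    have : (0 - Real.cos t) / Real.sin t = Real.tan (t - Real.pi / 2) := by
      rw [Real.tan_eq_sin_div_cos, Real.sin_sub_pi_div_two, Real.cos_sub_pi_div_two]
      ring
    rw [this, Real.arctan_tan (by linarith) (by linarith)]
  unfold dgG
  rw [a1, a2]
  norm_num
  ring_nf

noncomputable def dgF (u : ℝ) : ℝ :=
  -(2 * Real.log (1 + u) + dgG (Real.pi / 6) u + dgG (Real.pi / 3) u + dgG (Real.pi / 2) u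
    + dgG (Real.pi - Real.pi / 3) u + dgG (Real.pi - Real.pi / 6) u)

noncomputable def dgP (u : ℝ) : ℝ := ∑ i ∈ Finset.range 12, u ^ i

lemma dgF_deriv {u : ℝ} (hu : 0 ≤ u) : HasDerivAt dgF (-(12 * u ^ 10 / dgP u)) u := by
  have hpi := Real.pi_pos
  have l : HasDerivAt (fun u : ℝ => 2 * Real.log (1 + u)) (2 * (1 / (1 + u))) u :=
    (((hasDerivAt_id u).const_add 1).log (by simp only [id]; linarith)).const_mul 2
  have h := (((((l.add (dgG_deriv (t := Real.pi / 6) (by linarith) (by linarith) u)).add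
    (dgG_deriv (t := Real.pi / 3) (by linarith) (by linarith) u)).add
    (dgG_deriv (t := Real.pi / 2) (by linarith) (by linarith) u)).add
    (dgG_deriv (t := Real.pi - Real.pi / 3) (by linarith) (by linarith) u)).add
    (dgG_deriv (t := Real.pi - Real.pi / 6) (by linarith) (by linarith) u)).neg
  refine h.congr_deriv ?_
  have p1 := dgG_pos (t := Real.pi / 6) (by linarith) (by linarith) u
  have p2 := dgG_pos (t := Real.pi - Real.pi / 6) (by linarith) (by linarith) u
  simp only [Real.cos_pi_sub, Real.cos_pi_div_six, Real.cos_pi_div_three, Real.cos_pi_div_two]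
    at p1 p2 ⊢
  obtain ⟨s, hs⟩ : ∃ s, s = Real.sqrt 3 := ⟨_, rfl⟩
  have hs2 : s ^ 2 = 3 := by rw [hs]; exact Real.sq_sqrt (by norm_num)
  rw [← hs] at p1 p2 ⊢
  have p3 : 0 < u ^ 4 - u ^ 2 + 1 := by nlinarith [sq_nonneg (u ^ 2 - 1 / 2)]
  have p4 : 0 < u ^ 2 - u + 1 := by nlinarith [sq_nonneg (u - 1 / 2)]
  have p5 : 0 < u ^ 2 + u + 1 := by positivity
  have p6 : 0 < u ^ 2 + 1 := by positivity
  have p7 : 0 < 1 + u := by positivity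
  have pair : (2 * (1 - s / 2) * u + 4 * (s / 2) ^ 2 - 2 * (s / 2) - 2)
        / (u ^ 2 - 2 * (s / 2) * u + 1)
      + (2 * (1 - -(s / 2)) * u + 4 * (-(s / 2)) ^ 2 - 2 * (-(s / 2)) - 2)
        / (u ^ 2 - 2 * (-(s / 2)) * u + 1)
      = 2 * ((2 * u + 1) * (u ^ 2 + 1) - 3 * u ^ 2 - 3 * u) / (u ^ 4 - u ^ 2 + 1) := by
    rw [div_add_div _ _ p1.ne' p2.ne']
    have : (u ^ 2 - 2 * (s / 2) * u + 1) * (u ^ 2 - 2 * (-(s / 2)) * u + 1)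
      = u ^ 4 - u ^ 2 + 1 := by linear_combination (-u ^ 2) * hs2
    rw [this]
    congr 1
    have h4 : s ^ 4 = 9 := by linear_combination (s ^ 2 + 3) * hs2
    linear_combination (2 * u ^ 2 + 2 - 2 * u ^ 2 - 2 * u) * hs2
  have hP : dgP u = (1 + u) * (u ^ 2 + 1) * (u ^ 2 + u + 1) * (u ^ 2 - u + 1)
      * (u ^ 4 - u ^ 2 + 1) := by
    simp only [dgP, Finset.sum_range_succ, Finset.sum_range_zero]
    ring
  rw [hP]
  have q1 : u ^ 2 - 2 * (1 / 2) * u + 1 = u ^ 2 - u + 1 := by ring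
  have q2 : u ^ 2 - 2 * (-(1 / 2)) * u + 1 = u ^ 2 + u + 1 := by ring
  have q3 : u ^ 2 - 2 * 0 * u + 1 = u ^ 2 + 1 := by ring
  rw [q1, q2, q3]
  have key : 2 * (1 / (1 + u)) + 2 * ((2 * u + 1) * (u ^ 2 + 1) - 3 * u ^ 2 - 3 * u)
      / (u ^ 4 - u ^ 2 + 1)
      + (2 * (1 - 1 / 2) * u + 4 * (1 / 2) ^ 2 - 2 * (1 / 2) - 2) / (u ^ 2 - u + 1)
      + (2 * (1 - 0) * u + 4 * 0 ^ 2 - 2 * 0 - 2) / (u ^ 2 + 1)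
      + (2 * (1 - -(1 / 2)) * u + 4 * (-(1 / 2)) ^ 2 - 2 * (-(1 / 2)) - 2) / (u ^ 2 + u + 1)
      = 12 * u ^ 10 / ((1 + u) * (u ^ 2 + 1) * (u ^ 2 + u + 1) * (u ^ 2 - u + 1)
      * (u ^ 4 - u ^ 2 + 1)) := by
    have := p3.ne'
    have := p4.ne'
    have := p5.ne'
    have := p6.ne'
    have := p7.ne'
    obtain ⟨A, hA⟩ : ∃ A, A = u ^ 4 - u ^ 2 + 1 := ⟨_, rfl⟩
    obtain ⟨B, hB⟩ : ∃ B, B = u ^ 2 - u + 1 := ⟨_, rfl⟩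
    have hA0 : A ≠ 0 := by rw [hA]; exact p3.ne'
    have hB0 : B ≠ 0 := by rw [hB]; exact p4.ne'
    rw [← hA, ← hB]
    field_simp
    rw [hA, hB]
    ring
  rw [← key, ← pair]
  ring

noncomputable def dgS (n : ℕ) (u : ℝ) : ℝ :=
  ∑ k ∈ Finset.range n, (u ^ (12 * k + 12) / ((k:ℝ) + 1) - u ^ (12 * k + 11) / (11 / 12 + (k:ℝ)))

lemma dgS_deriv (n : ℕ) (u : ℝ) (hu : 0 ≤ u) :
    HasDerivAt (dgS n) (-(12 * u ^ 10 / dgP u) * (1 - u ^ (12 * n))) u := by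
  have h : HasDerivAt (dgS n)
      (∑ k ∈ Finset.range n, (12 * u ^ (12 * k + 11) - 12 * u ^ (12 * k + 10))) u := by
    unfold dgS
    refine HasDerivAt.fun_sum fun k _ => ?_
    have h1 := (hasDerivAt_pow (12 * k + 12) u).div_const ((k:ℝ) + 1)
    have h2 := (hasDerivAt_pow (12 * k + 11) u).div_const (11 / 12 + (k:ℝ))
    refine (h1.sub h2).congr_deriv ?_
    have : (k:ℝ) + 1 ≠ 0 := by positivity
    have : 11 / 12 + (k:ℝ) ≠ 0 := by positivity
    rw [show 12 * k + 12 - 1 = 12 * k + 11 by omega, show 12 * k + 11 - 1 = 12 * k + 10 by omega]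
    push_cast
    congr 1
    · field_simp
    · rw [div_eq_iff this]; ring
  refine h.congr_deriv ?_
  have hP : 0 < dgP u := by
    simp only [dgP, Finset.sum_range_succ, Finset.sum_range_zero]
    positivity
  induction n with
  | zero => simp
  | succ n ih =>
    have ih' := ih (by
      unfold dgS
      refine HasDerivAt.fun_sum fun k _ => ?_
      have h1 := (hasDerivAt_pow (12 * k + 12) u).div_const ((k:ℝ) + 1)
      have h2 := (hasDerivAt_pow (12 * k + 11) u).div_const (11 / 12 + (k:ℝ))
      refine (h1.sub h2).congr_deriv ?_
      have : (k:ℝ) + 1 ≠ 0 := by positivity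
      have : 11 / 12 + (k:ℝ) ≠ 0 := by positivity
      rw [show 12 * k + 12 - 1 = 12 * k + 11 by omega, show 12 * k + 11 - 1 = 12 * k + 10 by omega]
      push_cast
      congr 1
      · field_simp
      · rw [div_eq_iff this]; ring)
    rw [Finset.sum_range_succ, ih']
    have e : dgP u * (u - 1) = u ^ 12 - 1 := by
      simp only [dgP, Finset.sum_range_succ, Finset.sum_range_zero]
      ring
    have := hP.ne'
    field_simp
    rw [show 12 * (n + 1) = 12 * n + 12 by ring]
    simp only [pow_add]
    linear_combination (u ^ (12 * n) * u ^ 10) * e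

lemma dg_bound (n : ℕ) : dgF 1 - dgF 0 ≤ dgS n 1 - dgS n 0 ∧
    dgS n 1 - dgS n 0 ≤ dgF 1 - dgF 0 + 12 / (12 * n + 1) := by
  have hE : ∀ u : ℝ, 0 ≤ u → HasDerivAt (fun u => dgS n u - dgF u)
      (12 * u ^ 10 / dgP u * u ^ (12 * n)) u := fun u hu =>
    ((dgS_deriv n u hu).sub (dgF_deriv hu)).congr_deriv (by ring)
  have hE2 : ∀ u : ℝ, 0 ≤ u → HasDerivAt
      (fun u => 12 / (12 * n + 1) * u ^ (12 * n + 1) - (dgS n u - dgF u))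
      (12 * u ^ (12 * n) - 12 * u ^ 10 / dgP u * u ^ (12 * n)) u := fun u hu => by
    have := ((hasDerivAt_pow (12 * n + 1) u).const_mul (12 / (12 * (n:ℝ) + 1))).sub (hE u hu)
    refine this.congr_deriv ?_
    have : 12 * (n:ℝ) + 1 ≠ 0 := by positivity
    simp only [Nat.add_sub_cancel]
    push_cast
    field_simp
  have hP : ∀ u : ℝ, 0 ≤ u → u ^ 10 ≤ dgP u ∧ 0 < dgP u := by
    intro u hu
    simp only [dgP, Finset.sum_range_succ, Finset.sum_range_zero]
    constructor
    · have : 0 ≤ 1 + u + u ^ 2 + u ^ 3 + u ^ 4 + u ^ 5 + u ^ 6 + u ^ 7 + u ^ 8 + u ^ 9 + u ^ 11 := by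
        positivity
      linarith
    · positivity
  have m1 : MonotoneOn (fun u => dgS n u - dgF u) (Set.Icc 0 1) := by
    refine monotoneOn_of_hasDerivWithinAt_nonneg (convex_Icc 0 1)
      (fun u hu => (hE u hu.1).continuousAt.continuousWithinAt)
      (fun u hu => (hE u (interior_subset hu).1).hasDerivWithinAt) ?_
    intro u hu
    have h0 : 0 ≤ u := (interior_subset hu).1
    have := (hP u h0).2
    positivity
  have m2 : MonotoneOn (fun u => 12 / (12 * n + 1) * u ^ (12 * n + 1) - (dgS n u - dgF u))
      (Set.Icc 0 1) := by
    refine monotoneOn_of_hasDerivWithinAt_nonneg (convex_Icc 0 1)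
      (fun u hu => (hE2 u hu.1).continuousAt.continuousWithinAt)
      (fun u hu => (hE2 u (interior_subset hu).1).hasDerivWithinAt) ?_
    intro u hu
    have h0 : 0 ≤ u := (interior_subset hu).1
    have hp := hP u h0
    have : 12 * u ^ 10 / dgP u ≤ 12 := by
      rw [div_le_iff₀ hp.2]; linarith
    have h3 : 0 ≤ u ^ (12 * n) := by positivity
    nlinarith
  have r1 := m1 (by simp) (by simp) zero_le_one
  have r2 := m2 (by simp) (by simp) zero_le_one
  simp only [one_pow, zero_pow (Nat.succ_ne_zero _), mul_zero, mul_one] at r1 r2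
  constructor <;> linarith

lemma dg_main : digamma (11 / 12) + Real.eulerMascheroniConstant = dgF 1 - dgF 0 := by
  refine tendsto_nhds_unique dg_tendsto ?_
  have e : ∀ n : ℕ, dgS n 1 - dgS n 0
      = ∑ k ∈ Finset.range n, (1 / ((k:ℝ) + 1) - 1 / (11 / 12 + (k:ℝ))) := by
    intro n
    simp [dgS]
  refine Filter.Tendsto.congr e ?_
  have h0 : Filter.Tendsto (fun n : ℕ => dgF 1 - dgF 0 + 12 / (12 * (n:ℝ) + 1)) Filter.atTop
      (nhds (dgF 1 - dgF 0)) := by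
    have h : Filter.Tendsto (fun n : ℕ => 12 * (n:ℝ) + 1) Filter.atTop Filter.atTop :=
      Filter.tendsto_atTop_add_const_right _ _
        (tendsto_natCast_atTop_atTop.const_mul_atTop (by norm_num))
    simpa using (h.const_div_atTop 12).const_add (dgF 1 - dgF 0)
  exact tendsto_of_tendsto_of_tendsto_of_le_of_le tendsto_const_nhds h0
    (fun n => (dg_bound n).1) (fun n => (dg_bound n).2)

theorem digamma_eleven_twelfths :
    digamma (11 / 12) =
      -Real.eulerMascheroniConstant - Real.log 24
        + (2 + Real.sqrt 3) * (Real.pi / 2)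
        + Real.sqrt 3 * Real.log (2 - Real.sqrt 3) - Real.log (Real.sqrt 3) := by
  have h := dg_main
  have hpi := Real.pi_pos
  have d1 := dgG_diff (t := Real.pi / 6) (by linarith) (by linarith)
  have d2 := dgG_diff (t := Real.pi / 3) (by linarith) (by linarith)
  have d3 := dgG_diff (t := Real.pi / 2) (by linarith) (by linarith)
  have d4 := dgG_diff (t := Real.pi - Real.pi / 3) (by linarith) (by linarith)
  have d5 := dgG_diff (t := Real.pi - Real.pi / 6) (by linarith) (by linarith)
  simp only [Real.cos_pi_sub, Real.cos_pi_div_six, Real.cos_pi_div_three, Real.cos_pi_div_two,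
    Real.sin_pi_sub, Real.sin_pi_div_six, Real.sin_pi_div_three, Real.sin_pi_div_two]
    at d1 d2 d3 d4 d5
  have hs2 : Real.sqrt 3 ^ 2 = 3 := Real.sq_sqrt (by norm_num)
  have hs0 : 0 ≤ Real.sqrt 3 := Real.sqrt_nonneg 3
  have hlt : Real.sqrt 3 < 2 := by nlinarith
  have l1 : Real.log (2 + Real.sqrt 3) = -Real.log (2 - Real.sqrt 3) := by
    rw [← Real.log_inv]
    congr 1
    refine eq_inv_of_mul_eq_one_left ?_
    linear_combination -hs2
  have l2 : Real.log (Real.sqrt 3) = Real.log 3 / 2 := Real.log_sqrt (by norm_num)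
  have l3 : Real.log 24 = 3 * Real.log 2 + Real.log 3 := by
    rw [show (24:ℝ) = 2 ^ 3 * 3 by norm_num, Real.log_mul (by norm_num) (by norm_num), Real.log_pow]
    norm_num
  rw [show 2 - 2 * (Real.sqrt 3 / 2) = 2 - Real.sqrt 3 by ring] at d1
  rw [show (2:ℝ) - 2 * (1 / 2) = 1 by norm_num, Real.log_one] at d2
  rw [show (2:ℝ) - 2 * 0 = 2 by norm_num] at d3
  rw [show (2:ℝ) - 2 * -(1 / 2) = 3 by norm_num] at d4
  rw [show 2 - 2 * -(Real.sqrt 3 / 2) = 2 + Real.sqrt 3 by ring, l1] at d5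
  have e0 : Real.log (1 + 1) = Real.log 2 := by norm_num
  have e1 : Real.log (1 + 0) = 0 := by norm_num
  simp only [dgF, e0, e1] at h
  rw [l2, l3]
  linear_combination h - d1 - d2 - d3 - d4 - d5
end
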